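/- Let E belong to the class A(λ,n,m), let F = ⋃_{j=1}^t g_j(F) be a dust-like self-similar set, let f : F → E be a bi-Lipschitz bijection, and let s = dim_H E = dim_H F. Then the set of ratios { h(F_{w∗j}) / h(F_w) : w a finite word over {1,…,t}, j ∈ {1,…,t} } is a finite subset of ℝ, where w∗j denotes the word w with the letter j appended. -/

import Mathlib

open MeasureTheory Polynomial

/-- The class `𝒜(λ, n, m)` of self-similar subsets of `ℝ` with `m` exact overlaps,
generated by `n` similitudes `fᵢ x = λ x + bᵢ` of the same ratio `λ`. -/
def IsInClassA (lam : ℝ) (n m : ℕ) (E : Set ℝ) : Prop :=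
  lam ∈ Set.Ioo (0 : ℝ) 1 ∧ 1 ≤ m ∧ m + 2 ≤ n ∧
  ∃ b : ℕ → ℝ,
    b 0 = 0 ∧ b (n - 1) = 1 - lam ∧
    (∀ i, i + 1 < n → b i < b (i + 1)) ∧
    (∀ i, i + 1 < n →
      (Set.Icc (b i) (b i + lam) ∩ Set.Icc (b (i + 1)) (b (i + 1) + lam)).Nonempty →
        volume (Set.Icc (b i) (b i + lam) ∩ Set.Icc (b (i + 1)) (b (i + 1) + lam)) = 0 ∨
        volume (Set.Icc (b i) (b i + lam) ∩ Set.Icc (b (i + 1)) (b (i + 1) + lam)) =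
          ENNReal.ofReal (lam * lam)) ∧
    {i : ℕ | i + 1 < n ∧
      volume (Set.Icc (b i) (b i + lam) ∩ Set.Icc (b (i + 1)) (b (i + 1) + lam)) =
        ENNReal.ofReal (lam * lam)}.ncard = m ∧
    E.Nonempty ∧ IsCompact E ∧
    E = ⋃ i ∈ Finset.range n, (fun x => lam * x + b i) '' E

/-- A dust-like self-similar set in `ℝ^d`: the attractor of `t ≥ 2` contracting similitudes
whose images are pairwise disjoint (strong separation condition). -/
def IsDustLike {d : ℕ} (F : Set (EuclideanSpace ℝ (Fin d))) : Prop :=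
  F.Nonempty ∧ IsCompact F ∧
  ∃ t : ℕ, 2 ≤ t ∧
    ∃ (g : Fin t → EuclideanSpace ℝ (Fin d) → EuclideanSpace ℝ (Fin d)) (r : Fin t → ℝ),
      (∀ j, r j ∈ Set.Ioo (0 : ℝ) 1) ∧
      (∀ j x y, dist (g j x) (g j y) = r j * dist x y) ∧
      F = ⋃ j, g j '' F ∧
      (∀ j j', j ≠ j' → Disjoint (g j '' F) (g j' '' F))

/-- Lipschitz equivalence of two sets in (possibly different) metric spaces. -/
def LipEquiv {X Y : Type*} [MetricSpace X] [MetricSpace Y] (A : Set X) (B : Set Y) : Prop :=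
  ∃ f : A → B, Function.Bijective f ∧ ∃ C : ℝ, 0 < C ∧
    ∀ x y : A, C⁻¹ * dist x y ≤ dist (f x) (f y) ∧ dist (f x) (f y) ≤ C * dist x y

/-- The copy `F_w = g_{w₁} ∘ ⋯ ∘ g_{w_k}(F)` of `F` indexed by a finite word `w`. -/
def cylinder {X : Type*} {t : ℕ} (g : Fin t → X → X) (F : Set X) : List (Fin t) → Set X
  | [] => F
  | j :: w => g j '' cylinder g F w

/-!
A part of `E` whose distance to the rest of `E` is large compared to `λ ^ k` is a union of copies
of `E` of level `k`. The relative positions of these copies, rescaled to unit size, are neighbour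
types of the system. Since two first-level intervals that meet do so in a point or in an exact
overlap, the neighbour types of norm at most `1` are `0`, `±(1 - λ)` and `±1`, and it follows that
only finitely many neighbour types occur within any bounded distance.

Because `f` is bi-Lipschitz and `F` is dust-like, both `f(F_w)` and `f(F_{w∗j})` are such parts for
a common `k`, with diameter bounded by a multiple of `λ ^ k`. Up to the common factor `(λ ^ k) ^ s`
their measures therefore take finitely many values, and the factor cancels in the ratio.
-/

open scoped Pointwise Topology

section FiniteType

variable {V : Type*} [NormedAddCommGroup V] [NormedSpace ℝ V] {lam : ℝ} {D E : Set V}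

/-- The translation parts of the `k`-fold compositions of the maps `x ↦ lam • x + d`, `d ∈ D`:
the sums `d₀ + lam • d₁ + ⋯ + lam ^ (k - 1) • d_{k-1}` of digits of `D`. -/
def levelTranslations (lam : ℝ) (D : Set V) : ℕ → Set V
  | 0 => {0}
  | k + 1 => levelTranslations lam D k + lam ^ k • D

/-- The relative positions of two copies of level `k` of the system `x ↦ lam • x + d`, `d ∈ D`,
rescaled to unit size. -/
def levelNeighborTypes (lam : ℝ) (D : Set V) (k : ℕ) : Set V :=
  (lam ^ k)⁻¹ • (levelTranslations lam D k - levelTranslations lam D k)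

/-- The neighbour types of the system `x ↦ lam • x + d`, `d ∈ D`, of all levels. -/
def neighborTypes (lam : ℝ) (D : Set V) : Set V :=
  ⋃ k, levelNeighborTypes lam D k

/-- The finite type condition for the system `x ↦ lam • x + d`, `d ∈ D`: only finitely many
neighbour types occur within any given distance. -/
def HasFiniteType (lam : ℝ) (D : Set V) : Prop :=
  ∀ C : ℝ, (neighborTypes lam D ∩ Metric.closedBall 0 C).Finite

theorem eq_pow_smul_add_levelTranslations (hE : E = lam • E + D) (k : ℕ) :
    E = lam ^ k • E + levelTranslations lam D k := by
  induction k with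
  | zero => simp [levelTranslations]
  | succ k ih =>
    calc E = lam ^ k • (lam • E + D) + levelTranslations lam D k := by rwa [← hE]
      _ = lam ^ (k + 1) • E + levelTranslations lam D (k + 1) := by
        rw [smul_add, smul_smul, ← pow_succ, levelTranslations]
        abel

theorem inv_smul_sub_mem_neighborTypes {k : ℕ} {x y : V} (hx : x ∈ levelTranslations lam D k)
    (hy : y ∈ levelTranslations lam D k) : (lam ^ k)⁻¹ • (x - y) ∈ neighborTypes lam D :=
  Set.mem_iUnion_of_mem k (Set.smul_mem_smul_set (Set.sub_mem_sub hx hy))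

theorem levelNeighborTypes_zero : levelNeighborTypes lam D 0 = {0} := by
  simp [levelNeighborTypes, levelTranslations]

theorem levelNeighborTypes_succ (hlam : lam ≠ 0) (k : ℕ) :
    levelNeighborTypes lam D (k + 1) = lam⁻¹ • (levelNeighborTypes lam D k + (D - D)) := by
  have hsub : lam ^ k • D - lam ^ k • D = lam ^ k • (D - D) := by
    rw [sub_eq_add_neg, ← Set.smul_set_neg, ← smul_add, ← sub_eq_add_neg]
  rw [levelNeighborTypes, levelTranslations, add_sub_add_comm, hsub, pow_succ', mul_inv,
    mul_smul, smul_add, inv_smul_smul₀ (pow_ne_zero k hlam), levelNeighborTypes]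

theorem zero_mem_neighborTypes : (0 : V) ∈ neighborTypes lam D :=
  Set.mem_iUnion_of_mem 0 (levelNeighborTypes_zero.ge rfl)

theorem inv_smul_add_mem_neighborTypes (hlam : lam ≠ 0) {z δ : V} (hz : z ∈ neighborTypes lam D)
    (hδ : δ ∈ D - D) : lam⁻¹ • (z + δ) ∈ neighborTypes lam D := by
  obtain ⟨k, hk⟩ := Set.mem_iUnion.1 hz
  exact Set.mem_iUnion_of_mem (k + 1) <| (levelNeighborTypes_succ hlam k).ge <|
    Set.smul_mem_smul_set (Set.add_mem_add hk hδ)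

theorem neighborTypes_induction (hlam : lam ≠ 0) {p : V → Prop} (zero : p 0)
    (step : ∀ z ∈ neighborTypes lam D, p z → ∀ δ ∈ D - D, p (lam⁻¹ • (z + δ))) :
    ∀ z ∈ neighborTypes lam D, p z := by
  suffices h : ∀ k, ∀ z ∈ levelNeighborTypes lam D k, p z from
    fun z hz ↦ let ⟨k, hk⟩ := Set.mem_iUnion.1 hz; h k z hk
  intro k
  induction k with
  | zero => simpa [levelNeighborTypes_zero] using zero
  | succ k ih =>
    rw [levelNeighborTypes_succ hlam]
    rintro _ ⟨_, ⟨z, hz, δ, hδ, rfl⟩, rfl⟩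
    exact step z (Set.mem_iUnion_of_mem k hz) (ih z hz) δ hδ

theorem norm_le_of_norm_inv_smul_add_le (hlam : 0 < lam) {R η : ℝ} {z δ : V}
    (hδ : ‖δ‖ ≤ (1 - lam) * R) (hz : ‖lam⁻¹ • (z + δ)‖ ≤ R + η) : ‖z‖ ≤ R + lam * η := by
  have hzδ : ‖z + δ‖ ≤ lam * (R + η) := by
    rwa [norm_smul, norm_inv, Real.norm_of_nonneg hlam.le, inv_mul_le_iff₀ hlam] at hz
  calc ‖z‖ ≤ ‖z + δ‖ + ‖δ‖ := norm_le_add_norm_add z δ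
    _ ≤ lam * (R + η) + (1 - lam) * R := add_le_add hzδ hδ
    _ = R + lam * η := by ring

theorem neighborTypes_inter_closedBall_subset (hlam : lam ∈ Set.Ioo 0 1) {R η : ℝ} (hη : 0 ≤ η)
    (hD : ∀ δ ∈ D - D, ‖δ‖ ≤ (1 - lam) * R) {T : Set V} (zero_mem : 0 ∈ T)
    (hT : ∀ z ∈ T, ∀ δ ∈ D - D, ‖lam⁻¹ • (z + δ)‖ ≤ R + η → lam⁻¹ • (z + δ) ∈ T) :
    neighborTypes lam D ∩ Metric.closedBall 0 (R + η) ⊆ T := by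
  have key : ∀ z ∈ neighborTypes lam D, ‖z‖ ≤ R + η → z ∈ T := by
    refine neighborTypes_induction hlam.1.ne' (fun _ ↦ zero_mem) fun z _ ih δ hδ hz ↦ ?_
    refine hT z (ih ?_) δ hδ hz
    calc ‖z‖ ≤ R + lam * η := norm_le_of_norm_inv_smul_add_le hlam.1 (hD δ hδ) hz
      _ ≤ R + η := by gcongr; exact mul_le_of_le_one_left hη hlam.2.le
  exact fun z hz ↦ key z hz.1 (mem_closedBall_zero_iff.1 hz.2)

-- Only finitely many vectors are one step away from the ball of radius `R`, so for small `η` none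
-- of them lies in the shell `R < ‖z‖ ≤ R + η`, and no neighbour type ever enters this shell.
theorem exists_finite_neighborTypes_inter_closedBall_add (hlam : lam ∈ Set.Ioo 0 1)
    (hDfin : D.Finite) {R : ℝ} (hR : 0 ≤ R) (hD : ∀ δ ∈ D - D, ‖δ‖ ≤ (1 - lam) * R)
    (hfin : (neighborTypes lam D ∩ Metric.closedBall 0 R).Finite) :
    ∃ η > 0, (neighborTypes lam D ∩ Metric.closedBall 0 (R + η)).Finite := by
  set T := neighborTypes lam D ∩ Metric.closedBall 0 R
  have hstep : (lam⁻¹ • (T + (D - D))).Finite := (hfin.add (hDfin.sub hDfin)).smul_set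
  have hgap : ∀ᶠ η in 𝓝[>] (0 : ℝ), ∀ z ∈ lam⁻¹ • (T + (D - D)), ‖z‖ ≤ R + η → ‖z‖ ≤ R := by
    refine (Filter.eventually_all_finite hstep).2 fun z _ ↦ ?_
    rcases le_or_gt ‖z‖ R with hz | hz
    · exact .of_forall fun _ _ ↦ hz
    · filter_upwards [Ioo_mem_nhdsGT (sub_pos.2 hz)] with η hη hzη
      linarith [hη.2]
  obtain ⟨η, hη, hη_pos⟩ := (hgap.and self_mem_nhdsWithin).exists
  refine ⟨η, hη_pos, hfin.subset <| neighborTypes_inter_closedBall_subset hlam (le_of_lt hη_pos) hD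
    ⟨zero_mem_neighborTypes, by simpa using hR⟩ fun z hz δ hδ hzδ ↦ ?_⟩
  have hzδ_mem := Set.smul_mem_smul_set (a := lam⁻¹) (Set.add_mem_add hz hδ)
  exact ⟨inv_smul_add_mem_neighborTypes hlam.1.ne' hz.1 hδ,
    mem_closedBall_zero_iff.2 (hη _ hzδ_mem hzδ)⟩

theorem finite_neighborTypes_inter_closedBall_add_div (hlam : 0 < lam) (hDfin : D.Finite) {R η : ℝ}
    (hD : ∀ δ ∈ D - D, ‖δ‖ ≤ (1 - lam) * R)
    (hfin : (neighborTypes lam D ∩ Metric.closedBall 0 (R + η)).Finite) :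
    (neighborTypes lam D ∩ Metric.closedBall 0 (R + η / lam)).Finite := by
  set S := neighborTypes lam D ∩ Metric.closedBall 0 (R + η)
  have hstep : (insert 0 (lam⁻¹ • (S + (D - D)))).Finite :=
    (hfin.add (hDfin.sub hDfin)).smul_set.insert 0
  have key : ∀ z ∈ neighborTypes lam D,
      ‖z‖ ≤ R + η / lam → z ∈ insert 0 (lam⁻¹ • (S + (D - D))) := by
    refine neighborTypes_induction hlam.ne' (fun _ ↦ Set.mem_insert 0 _) fun z hz _ δ hδ hzδ ↦ ?_
    have hz_le : ‖z‖ ≤ R + η := by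
      simpa [mul_div_cancel₀ η hlam.ne'] using norm_le_of_norm_inv_smul_add_le hlam (hD δ hδ) hzδ
    exact .inr <| Set.smul_mem_smul_set <|
      Set.add_mem_add ⟨hz, mem_closedBall_zero_iff.2 hz_le⟩ hδ
  exact hstep.subset fun z hz ↦ key z hz.1 (mem_closedBall_zero_iff.1 hz.2)

theorem hasFiniteType_of_finite_inter_closedBall (hlam : lam ∈ Set.Ioo 0 1) (hDfin : D.Finite)
    {R : ℝ} (hR : 0 ≤ R) (hD : ∀ δ ∈ D - D, ‖δ‖ ≤ (1 - lam) * R)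
    (hfin : (neighborTypes lam D ∩ Metric.closedBall 0 R).Finite) : HasFiniteType lam D := by
  intro C
  obtain ⟨η, hη, hfin_η⟩ := exists_finite_neighborTypes_inter_closedBall_add hlam hDfin hR hD hfin
  have hpow : ∀ q : ℕ, (neighborTypes lam D ∩ Metric.closedBall 0 (R + η / lam ^ q)).Finite := by
    intro q
    induction q with
    | zero => simpa using hfin_η
    | succ q ih =>
      rw [pow_succ, ← div_div]
      exact finite_neighborTypes_inter_closedBall_add_div hlam.1 hDfin hD ih
  obtain ⟨q, hq⟩ := pow_unbounded_of_one_lt (C / η) ((one_lt_inv₀ hlam.1).2 hlam.2)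
  refine (hpow q).subset (Set.inter_subset_inter_right _ (Metric.closedBall_subset_closedBall ?_))
  calc C ≤ η / lam ^ q := by
        rw [div_eq_mul_inv, ← inv_pow, mul_comm]
        exact (div_le_iff₀ hη).1 hq.le
    _ ≤ R + η / lam ^ q := le_add_of_nonneg_left hR

end FiniteType

section ClassA

variable {lam : ℝ} {D E : Set ℝ}

/-- The distances `g ≥ 0` allowed between two digits of a class `𝒜` system: two first-level
intervals, of length `lam`, coincide, overlap in an interval of length `lam ^ 2`, or do not
overlap. -/
def IsAdmissibleGap (lam g : ℝ) : Prop :=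
  g = 0 ∨ g = lam * (1 - lam) ∨ lam ≤ g

/-- The properties of the set `D = {b₁, …, bₙ}` of translations of a class `𝒜` system from which
the finite type condition follows. -/
structure IsClassADigitSet (lam : ℝ) (D : Set ℝ) : Prop where
  pos : 0 < lam
  le_half : lam ≤ 1 / 2
  finite : D.Finite
  zero_mem : 0 ∈ D
  one_sub_mem : 1 - lam ∈ D
  subset_Icc : D ⊆ Set.Icc 0 (1 - lam)
  gap : ∀ x ∈ D, ∀ y ∈ D, y ≤ x → IsAdmissibleGap lam (x - y)

theorem IsAdmissibleGap.add (h0 : 0 < lam) (hhalf : lam ≤ 1 / 2) {g g' : ℝ}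
    (hg : IsAdmissibleGap lam g) (hg' : IsAdmissibleGap lam g') :
    IsAdmissibleGap lam (g + g') := by
  have hoverlap : lam ≤ 2 * (lam * (1 - lam)) := by nlinarith
  rcases hg with rfl | rfl | hg
  · rwa [zero_add]
  · rcases hg' with rfl | rfl | hg'
    · exact .inr (.inl (add_zero _))
    · exact .inr (.inr (by linarith))
    · exact .inr (.inr (by linarith))
  · have : 0 ≤ g' := by rcases hg' with h | h | h <;> linarith
    exact .inr (.inr (by linarith))

theorem IsAdmissibleGap.inv_mul_eq (h0 : 0 < lam) {g : ℝ} (hg : IsAdmissibleGap lam g)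
    (hle : lam⁻¹ * g ≤ 1) : lam⁻¹ * g = 0 ∨ lam⁻¹ * g = 1 - lam ∨ lam⁻¹ * g = 1 := by
  rcases hg with rfl | rfl | hg
  · exact .inl (mul_zero _)
  · exact .inr (.inl (inv_mul_cancel_left₀ h0.ne' _))
  · exact .inr (.inr (hle.antisymm (by rwa [le_inv_mul_iff₀ h0, mul_one])))

namespace IsClassADigitSet

theorem abs_le_of_mem_sub (hD : IsClassADigitSet lam D) {δ : ℝ} (hδ : δ ∈ D - D) :
    |δ| ≤ 1 - lam := by
  obtain ⟨x, hx, y, hy, rfl⟩ := hδ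
  simpa using abs_sub_le_of_le_of_le (hD.subset_Icc hx).1 (hD.subset_Icc hx).2
    (hD.subset_Icc hy).1 (hD.subset_Icc hy).2

theorem isAdmissibleGap_abs (hD : IsClassADigitSet lam D) {δ : ℝ} (hδ : δ ∈ D - D) :
    IsAdmissibleGap lam |δ| := by
  obtain ⟨x, hx, y, hy, rfl⟩ := hδ
  rcases le_total y x with h | h
  · simpa only [abs_of_nonneg (sub_nonneg.2 h)] using hD.gap x hx y hy h
  · simpa only [abs_sub_comm x y, abs_of_nonneg (sub_nonneg.2 h)] using hD.gap y hy x hx h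

theorem isAdmissibleGap_one_sub_add (hD : IsClassADigitSet lam D) {δ : ℝ} (hδ : δ ∈ D - D) :
    IsAdmissibleGap lam (1 - lam + δ) := by
  obtain ⟨x, hx, y, hy, rfl⟩ := hδ
  have hx_gap := hD.gap x hx 0 hD.zero_mem (hD.subset_Icc hx).1
  have hy_gap := hD.gap _ hD.one_sub_mem y hy (hD.subset_Icc hy).2
  convert hy_gap.add hD.pos hD.le_half hx_gap using 1
  ring

theorem isAdmissibleGap_abs_add (hD : IsClassADigitSet lam D) {z δ : ℝ}
    (hz : |z| ∈ ({0, 1 - lam, 1} : Set ℝ)) (hδ : δ ∈ D - D) : IsAdmissibleGap lam |z + δ| := by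
  wlog hz_nonneg : 0 ≤ z generalizing z δ
  · rw [← abs_neg, neg_add]
    have hδ_neg : -δ ∈ D - D := by rwa [← Set.mem_neg, neg_sub]
    exact this (by rwa [abs_neg]) hδ_neg (neg_nonneg.2 (le_of_not_ge hz_nonneg))
  rw [abs_of_nonneg hz_nonneg] at hz
  have hδ_ge := (abs_le.1 (hD.abs_le_of_mem_sub hδ)).1
  rcases hz with rfl | rfl | rfl
  · rw [zero_add]
    exact hD.isAdmissibleGap_abs hδ
  · rw [abs_of_nonneg (by linarith)]
    exact hD.isAdmissibleGap_one_sub_add hδ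
  · exact .inr (.inr (le_abs.2 (.inl (by linarith))))

theorem hasFiniteType (hD : IsClassADigitSet lam D) : HasFiniteType lam D := by
  have hlam : lam ∈ Set.Ioo 0 1 := ⟨hD.pos, by linarith [hD.le_half]⟩
  have hdiff : ∀ δ ∈ D - D, ‖δ‖ ≤ (1 - lam) * 1 := fun δ hδ ↦ by
    simpa using hD.abs_le_of_mem_sub hδ
  refine hasFiniteType_of_finite_inter_closedBall hlam hD.finite zero_le_one hdiff ?_
  set S : Set ℝ := {0, 1 - lam, 1}
  have hfin : {z : ℝ | |z| ∈ S}.Finite :=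
    (S.toFinite.union S.toFinite.neg).subset fun z (hz : |z| ∈ S) ↦
      (abs_choice z).imp (fun h ↦ by rwa [h] at hz) (fun h ↦ by rwa [h] at hz)
  refine hfin.subset ?_
  rw [← add_zero (1 : ℝ)]
  refine neighborTypes_inter_closedBall_subset hlam le_rfl hdiff (by simp [S]) fun z hz δ hδ h ↦ ?_
  have habs : |lam⁻¹ • (z + δ)| = lam⁻¹ * |z + δ| := by
    rw [smul_eq_mul, abs_mul, abs_of_pos (inv_pos.2 hD.pos)]
  rw [add_zero, Real.norm_eq_abs, habs] at h
  have hmem : |lam⁻¹ • (z + δ)| ∈ S := by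
    rw [habs]
    exact (hD.isAdmissibleGap_abs_add hz hδ).inv_mul_eq hD.pos h
  exact hmem

end IsClassADigitSet

theorem isAdmissibleGap_of_volume_inter {x y : ℝ} (h0 : 0 < lam) (hxy : x < y)
    (hov : (Set.Icc x (x + lam) ∩ Set.Icc y (y + lam)).Nonempty →
      volume (Set.Icc x (x + lam) ∩ Set.Icc y (y + lam)) = 0 ∨
      volume (Set.Icc x (x + lam) ∩ Set.Icc y (y + lam)) = ENNReal.ofReal (lam * lam)) :
    IsAdmissibleGap lam (y - x) := by
  rcases le_or_gt lam (y - x) with hle | hlt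
  · exact .inr (.inr hle)
  have hinter : Set.Icc x (x + lam) ∩ Set.Icc y (y + lam) = Set.Icc y (x + lam) := by
    rw [Set.Icc_inter_Icc, sup_eq_right.2 hxy.le, inf_eq_left.2 (by linarith)]
  rw [hinter, Real.volume_Icc] at hov
  rcases hov (Set.nonempty_Icc.2 (by linarith)) with h | h
  · linarith [ENNReal.ofReal_eq_zero.1 h]
  · rw [ENNReal.ofReal_eq_ofReal_iff (by linarith) (by positivity)] at h
    exact .inr (.inl (by linarith))

theorem IsAdmissibleGap.mul_one_sub_le (h0 : 0 < lam) {g : ℝ} (hg : IsAdmissibleGap lam g)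
    (hpos : 0 < g) : lam * (1 - lam) ≤ g := by
  rcases hg with h | h | h
  · exact absurd h hpos.ne'
  · exact h.ge
  · nlinarith

section Translations

variable {n : ℕ} {b : ℕ → ℝ}

-- Three intervals of length `lam` fit into `[0, 1]` with consecutive overlaps at most `lam ^ 2`.
theorem le_half_of_isAdmissibleGap (h0 : 0 < lam) (h1 : lam < 1) (hn : 3 ≤ n) (hb0 : b 0 = 0)
    (hbn : b (n - 1) = 1 - lam) (hb : StrictMonoOn b (Set.Iio n))
    (hgap : ∀ i, i + 1 < n → IsAdmissibleGap lam (b (i + 1) - b i)) : lam ≤ 1 / 2 := by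
  have hstep : ∀ i, i + 1 < n → lam * (1 - lam) ≤ b (i + 1) - b i := fun i hi ↦
    (hgap i hi).mul_one_sub_le h0 (sub_pos.2 (hb (Nat.lt_of_succ_lt hi) hi i.lt_succ_self))
  have hlast : b 2 ≤ b (n - 1) :=
    hb.monotoneOn (Set.mem_Iio.2 (by lia)) (Set.mem_Iio.2 (by lia)) (by lia)
  have htotal : 2 * lam * (1 - lam) ≤ 1 * (1 - lam) := by
    linarith [hstep 0 (by lia), hstep 1 (by lia)]
  linarith [le_of_mul_le_mul_right htotal (sub_pos.2 h1)]

theorem isAdmissibleGap_sub_of_le (h0 : 0 < lam) (hhalf : lam ≤ 1 / 2)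
    (hgap : ∀ i, i + 1 < n → IsAdmissibleGap lam (b (i + 1) - b i)) {i j : ℕ} (hji : j ≤ i)
    (hi : i < n) : IsAdmissibleGap lam (b i - b j) := by
  induction i, hji using Nat.le_induction with
  | base => exact .inl (sub_self _)
  | succ i _ ih =>
    rw [← sub_add_sub_cancel _ (b i)]
    exact (hgap i hi).add h0 hhalf (ih (Nat.lt_of_succ_lt hi))

end Translations

theorem IsInClassA.exists_isClassADigitSet {n m : ℕ} (hE : IsInClassA lam n m E) :
    ∃ D, IsClassADigitSet lam D ∧ E = lam • E + D := by
  obtain ⟨⟨h0, h1⟩, hm, hmn, b, hb0, hbn, hb_lt, hov, -, -, -, hEattr⟩ := hE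
  have hb : StrictMonoOn b (Set.Iio n) :=
    strictMonoOn_of_lt_add_one Set.ordConnected_Iio fun i _ _ hi ↦ hb_lt i hi
  have hgap : ∀ i, i + 1 < n → IsAdmissibleGap lam (b (i + 1) - b i) := fun i hi ↦
    isAdmissibleGap_of_volume_inter h0 (hb_lt i hi) (hov i hi)
  have hhalf := le_half_of_isAdmissibleGap h0 h1 (by lia) hb0 hbn hb hgap
  refine ⟨b '' Set.Iio n, ⟨h0, hhalf, (Set.finite_Iio n).image b, ⟨0, Set.mem_Iio.2 (by lia), hb0⟩,
    ⟨n - 1, Set.mem_Iio.2 (by lia), hbn⟩, ?_, ?_⟩, ?_⟩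
  · rintro _ ⟨i, hi, rfl⟩
    rw [Set.mem_Iio] at hi
    exact ⟨hb0 ▸ hb.monotoneOn (Set.mem_Iio.2 (by lia)) hi i.zero_le,
      hbn ▸ hb.monotoneOn hi (Set.mem_Iio.2 (by lia)) (by lia)⟩
  · rintro _ ⟨i, hi, rfl⟩ _ ⟨j, hj, rfl⟩ hji
    exact isAdmissibleGap_sub_of_le h0 hhalf hgap ((hb.le_iff_le hj hi).1 hji) hi
  · refine hEattr.trans ?_
    rw [← Set.image2_add, ← Set.image_smul, Set.image2_image_left, Set.image2_image_right,
      ← Set.iUnion_image_right]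
    simp only [Finset.mem_range, Set.mem_Iio, smul_eq_mul]

end ClassA

section Similitude

variable {X Y : Type*} [MetricSpace X] [MetricSpace Y] [MeasurableSpace X] [BorelSpace X]
  [MeasurableSpace Y] [BorelSpace Y] {φ : X → Y} {ρ s : ℝ}

theorem hausdorffMeasure_image_of_dist_eq (hρ : 0 < ρ)
    (hφ : ∀ x y, dist (φ x) (φ y) = ρ * dist x y) (hs : 0 ≤ s) (A : Set X) :
    μH[s] (φ '' A) = ENNReal.ofReal ρ ^ s * μH[s] A := by
  have hlip : LipschitzWith ρ.toNNReal φ := .of_dist_le_mul fun x y ↦ by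
    rw [hφ, Real.coe_toNNReal _ hρ.le]
  have hanti : AntilipschitzWith ρ.toNNReal⁻¹ φ := .of_le_mul_dist fun x y ↦ by
    rw [hφ, NNReal.coe_inv, Real.coe_toNNReal _ hρ.le, inv_mul_cancel_left₀ hρ.ne']
  refine (hlip.hausdorffMeasure_image_le hs A).antisymm ?_
  have hlower := hanti.le_hausdorffMeasure_image hs A
  rw [ENNReal.coe_inv (Real.toNNReal_pos.2 hρ).ne', ENNReal.inv_rpow] at hlower
  rwa [mul_comm, ← ENNReal.le_div_iff_mul_le, ENNReal.div_eq_inv_mul]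
  · exact .inl (ENNReal.rpow_pos (ENNReal.ofReal_pos.2 hρ) ENNReal.ofReal_ne_top).ne'
  · exact .inl (ENNReal.rpow_ne_top_of_nonneg hs ENNReal.ofReal_ne_top)

theorem toReal_hausdorffMeasure_image_of_dist_eq (hρ : 0 < ρ)
    (hφ : ∀ x y, dist (φ x) (φ y) = ρ * dist x y) (hs : 0 ≤ s) (A : Set X) :
    (μH[s] (φ '' A)).toReal = ρ ^ s * (μH[s] A).toReal := by
  rw [hausdorffMeasure_image_of_dist_eq hρ hφ hs, ENNReal.toReal_mul, ← ENNReal.toReal_rpow,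
    ENNReal.toReal_ofReal hρ.le]

end Similitude

section Isolated

variable {X Y : Type*} [PseudoMetricSpace X] [PseudoMetricSpace Y] {P Q E : Set X} {δ δ' : ℝ}

/-- `P` is a part of `E` at distance at least `δ` from the rest of `E`. -/
structure IsIsolatedIn (P E : Set X) (δ : ℝ) : Prop where
  subset : P ⊆ E
  le_dist : ∀ x ∈ P, ∀ y ∈ E \ P, δ ≤ dist x y

namespace IsIsolatedIn

theorem mono (h : IsIsolatedIn P E δ) (hδ : δ' ≤ δ) : IsIsolatedIn P E δ' :=
  ⟨h.subset, fun x hx y hy ↦ hδ.trans (h.le_dist x hx y hy)⟩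

theorem trans (hPQ : IsIsolatedIn P Q δ) (hQE : IsIsolatedIn Q E δ) : IsIsolatedIn P E δ := by
  refine ⟨hPQ.subset.trans hQE.subset, fun x hx y hy ↦ ?_⟩
  by_cases hyQ : y ∈ Q
  · exact hPQ.le_dist x hx y ⟨hyQ, hy.2⟩
  · exact hQE.le_dist x (hPQ.subset hx) y ⟨hy.1, hyQ⟩

theorem image (h : IsIsolatedIn P E δ) {φ : X → Y} {K : ℝ} (hK : 0 ≤ K)
    (hφ : ∀ x ∈ E, ∀ y ∈ E, K * dist x y ≤ dist (φ x) (φ y)) :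
    IsIsolatedIn (φ '' P) (φ '' E) (K * δ) := by
  refine ⟨Set.image_mono h.subset, ?_⟩
  rintro _ ⟨x, hx, rfl⟩ _ ⟨⟨y, hy, rfl⟩, hyP⟩
  calc K * δ ≤ K * dist x y :=
        mul_le_mul_of_nonneg_left (h.le_dist x hx y ⟨hy, fun h ↦ hyP ⟨y, h, rfl⟩⟩) hK
    _ ≤ dist (φ x) (φ y) := hφ x (h.subset hx) y hy

end IsIsolatedIn

theorem exists_isIsolatedIn_iUnion {ι : Type*} [Finite ι] {K : ι → Set X}
    (hK : ∀ i, IsCompact (K i)) (hclosed : ∀ i, IsClosed (K i))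
    (hdisj : ∀ i j, i ≠ j → Disjoint (K i) (K j)) :
    ∃ c > 0, ∀ i, IsIsolatedIn (K i) (⋃ j, K j) c := by
  have hpair (i : ι) : ∀ᶠ c in 𝓝[>] (0 : ℝ), IsIsolatedIn (K i) (⋃ j, K j) c := by
    have hrest : IsClosed (⋃ j ∈ ({i}ᶜ : Set ι), K j) :=
      (Set.toFinite _).isClosed_biUnion fun j _ ↦ hclosed j
    have hdisj_rest : Disjoint (K i) (⋃ j ∈ ({i}ᶜ : Set ι), K j) :=
      Set.disjoint_iUnion₂_right.2 fun j hj ↦ hdisj i j (Ne.symm hj)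
    obtain ⟨ε, hε, hdist⟩ := Metric.exists_pos_forall_lt_edist (hK i) hrest hdisj_rest
    filter_upwards [Ioo_mem_nhdsGT (NNReal.coe_pos.2 hε)] with c hc
    refine ⟨Set.subset_iUnion K i, fun x hx y ⟨hy, hyi⟩ ↦ ?_⟩
    obtain ⟨j, hj⟩ := Set.mem_iUnion.1 hy
    have hij : j ∈ ({i}ᶜ : Set ι) := fun h ↦ hyi (h ▸ hj)
    have hlt := hdist x hx y (Set.mem_biUnion hij hj)
    rw [edist_nndist, ENNReal.coe_lt_coe] at hlt
    exact (hc.2.trans hlt).le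
  obtain ⟨c, hc, hc_pos⟩ := ((Filter.eventually_all.2 hpair).and self_mem_nhdsWithin).exists
  exact ⟨c, hc_pos, hc⟩

end Isolated

section DustLike

variable {X : Type*} {t : ℕ} {g : Fin t → X → X} {r : Fin t → ℝ} {F : Set X}

/-- The composition `g_{w₁} ∘ ⋯ ∘ g_{w_k}` along a word `w`. -/
def wordMap (g : Fin t → X → X) : List (Fin t) → X → X
  | [] => id
  | j :: w => g j ∘ wordMap g w

/-- The similarity ratio `r_{w₁} ⋯ r_{w_k}` of `wordMap g w`. -/
def wordRatio (r : Fin t → ℝ) (w : List (Fin t)) : ℝ :=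
  (w.map r).prod

theorem wordRatio_append_singleton (w : List (Fin t)) (j : Fin t) :
    wordRatio r (w ++ [j]) = wordRatio r w * r j := by
  simp [wordRatio]

theorem cylinder_eq_image_wordMap (w : List (Fin t)) :
    _root_.cylinder g F w = wordMap g w '' F := by
  induction w with
  | nil => exact (Set.image_id F).symm
  | cons j w ih => rw [_root_.cylinder, ih, wordMap, Set.image_comp]

variable [MetricSpace X]

/-- `F` is the attractor of the similitudes `g j` of ratios `r j`, and these satisfy the strong
separation condition. This is `IsDustLike` with the similitudes as data, in a metric space. -/
structure IsDustLikeAttractor (g : Fin t → X → X) (r : Fin t → ℝ) (F : Set X) : Prop where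
  ratio_mem : ∀ j, r j ∈ Set.Ioo 0 1
  dist_map : ∀ j x y, dist (g j x) (g j y) = r j * dist x y
  nonempty : F.Nonempty
  isCompact : IsCompact F
  eq_iUnion : F = ⋃ j, g j '' F
  disjoint : ∀ j j', j ≠ j' → Disjoint (g j '' F) (g j' '' F)

namespace IsDustLikeAttractor

theorem wordRatio_mem_Ioc (hF : IsDustLikeAttractor g r F) (w : List (Fin t)) :
    wordRatio r w ∈ Set.Ioc 0 1 := by
  induction w with
  | nil => simp [wordRatio]
  | cons j w ih =>
    obtain ⟨hj0, hj1⟩ := hF.ratio_mem j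
    rw [wordRatio, List.map_cons, List.prod_cons]
    exact ⟨mul_pos hj0 ih.1, mul_le_one₀ hj1.le ih.1.le ih.2⟩

theorem dist_wordMap (hF : IsDustLikeAttractor g r F) (w : List (Fin t)) (x y : X) :
    dist (wordMap g w x) (wordMap g w y) = wordRatio r w * dist x y := by
  induction w with
  | nil => simp [wordMap, wordRatio]
  | cons j w ih =>
    rw [wordMap, Function.comp_apply, Function.comp_apply, hF.dist_map, ih, wordRatio, wordRatio,
      List.map_cons, List.prod_cons, mul_assoc]

theorem cylinder_nonempty (hF : IsDustLikeAttractor g r F) (w : List (Fin t)) :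
    (_root_.cylinder g F w).Nonempty := by
  rw [cylinder_eq_image_wordMap]
  exact hF.nonempty.image _

theorem dist_le_of_mem_cylinder (hF : IsDustLikeAttractor g r F) {w : List (Fin t)} {x y : X}
    (hx : x ∈ _root_.cylinder g F w) (hy : y ∈ _root_.cylinder g F w) :
    dist x y ≤ wordRatio r w * Metric.diam F := by
  rw [cylinder_eq_image_wordMap] at hx hy
  obtain ⟨x, hx, rfl⟩ := hx
  obtain ⟨y, hy, rfl⟩ := hy
  rw [hF.dist_wordMap]
  exact mul_le_mul_of_nonneg_left (Metric.dist_le_diam_of_mem hF.isCompact.isBounded hx hy)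
    (hF.wordRatio_mem_Ioc w).1.le

theorem toReal_hausdorffMeasure_cylinder [MeasurableSpace X] [BorelSpace X]
    (hF : IsDustLikeAttractor g r F) {s : ℝ} (hs : 0 ≤ s) (w : List (Fin t)) :
    (μH[s] (_root_.cylinder g F w)).toReal = wordRatio r w ^ s * (μH[s] F).toReal := by
  rw [cylinder_eq_image_wordMap,
    toReal_hausdorffMeasure_image_of_dist_eq (hF.wordRatio_mem_Ioc w).1 (hF.dist_wordMap w) hs]

theorem isCompact_image (hF : IsDustLikeAttractor g r F) (j : Fin t) : IsCompact (g j '' F) := by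
  have hlip : LipschitzWith (r j).toNNReal (g j) := .of_dist_le_mul fun x y ↦ by
    rw [hF.dist_map, Real.coe_toNNReal _ (hF.ratio_mem j).1.le]
  exact hF.isCompact.image hlip.continuous

theorem exists_isIsolatedIn_image (hF : IsDustLikeAttractor g r F) :
    ∃ c > 0, ∀ j, IsIsolatedIn (g j '' F) F c := by
  have hiso := exists_isIsolatedIn_iUnion hF.isCompact_image
    (fun j ↦ (hF.isCompact_image j).isClosed) hF.disjoint
  rwa [← hF.eq_iUnion] at hiso

theorem exists_isIsolatedIn_cylinder (hF : IsDustLikeAttractor g r F) :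
    ∃ c > 0, ∀ w, IsIsolatedIn (_root_.cylinder g F w) F (c * wordRatio r w) := by
  obtain ⟨c, hc, hiso⟩ := hF.exists_isIsolatedIn_image
  refine ⟨c, hc, fun w ↦ ?_⟩
  induction w with
  | nil => exact ⟨subset_rfl, fun x _ y hy ↦ absurd hy.1 hy.2⟩
  | cons j w ih =>
    have hρ := hF.wordRatio_mem_Ioc (j :: w)
    have hcopy := ih.image (φ := g j) (hF.ratio_mem j).1.le fun x _ y _ ↦ (hF.dist_map j x y).ge
    have hratio : r j * (c * wordRatio r w) = c * wordRatio r (j :: w) := by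
      rw [wordRatio, wordRatio, List.map_cons, List.prod_cons, mul_left_comm]
    rw [hratio] at hcopy
    exact hcopy.trans ((hiso j).mono (mul_le_of_le_one_right hc.le hρ.2))

theorem cylinder_subset (hF : IsDustLikeAttractor g r F) (w : List (Fin t)) :
    _root_.cylinder g F w ⊆ F :=
  let ⟨_, _, hiso⟩ := hF.exists_isIsolatedIn_cylinder
  (hiso w).subset

theorem dist_image_le_of_mem_cylinder {Y : Type*} [PseudoMetricSpace Y]
    (hF : IsDustLikeAttractor g r F) {f : X → Y} {K : ℝ} (hK : 0 ≤ K)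
    (hf : ∀ x ∈ F, ∀ y ∈ F, dist (f x) (f y) ≤ K * dist x y) {w : List (Fin t)} {x y : X}
    (hx : x ∈ _root_.cylinder g F w) (hy : y ∈ _root_.cylinder g F w) :
    dist (f x) (f y) ≤ K * Metric.diam F * wordRatio r w := by
  calc dist (f x) (f y)
    _ ≤ K * dist x y := hf x (hF.cylinder_subset w hx) y (hF.cylinder_subset w hy)
    _ ≤ K * (wordRatio r w * Metric.diam F) :=
      mul_le_mul_of_nonneg_left (hF.dist_le_of_mem_cylinder hx hy) hK
    _ = K * Metric.diam F * wordRatio r w := by ring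

end IsDustLikeAttractor

end DustLike

section Pieces

variable {V : Type*} [NormedAddCommGroup V] [NormedSpace ℝ V] {lam δ R C : ℝ} {k : ℕ}
  {D E P : Set V}

namespace IsIsolatedIn

-- A level `k` copy of `E` has diameter less than `δ`, so it cannot leave `P` once it meets `P`.
theorem exists_eq_smul_add (hP : IsIsolatedIn P E δ) (hlam : 0 < lam) (hE : E = lam • E + D)
    (hR : ∀ x ∈ E, ∀ y ∈ E, dist x y ≤ R) (hδ : lam ^ k * R < δ) :
    ∃ A ⊆ levelTranslations lam D k, P = lam ^ k • E + A := by
  have hcover := eq_pow_smul_add_levelTranslations hE k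
  refine ⟨{a ∈ levelTranslations lam D k | ∃ e ∈ E, lam ^ k • e + a ∈ P}, Set.sep_subset _ _,
    subset_antisymm (fun p hp ↦ ?_) ?_⟩
  · obtain ⟨_, ⟨e, he, rfl⟩, a, ha, rfl⟩ := hcover.le (hP.subset hp)
    exact Set.add_mem_add (Set.smul_mem_smul_set he) ⟨ha, e, he, hp⟩
  · rintro _ ⟨_, ⟨e', he', rfl⟩, a, ⟨ha, e, he, hp⟩, rfl⟩
    by_contra hp'
    have hmem : lam ^ k • e' + a ∈ E :=
      hcover.ge (Set.add_mem_add (Set.smul_mem_smul_set he') ha)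
    have hle : δ ≤ lam ^ k * dist e e' := by
      simpa [dist_smul₀, abs_of_pos hlam] using hP.le_dist _ hp _ ⟨hmem, hp'⟩
    exact (hle.trans (mul_le_mul_of_nonneg_left (hR e he e' he') (pow_pos hlam k).le)).not_gt hδ

theorem exists_eq_image_add_neighborTypes (hP : IsIsolatedIn P E δ) (hlam : 0 < lam)
    (hE : E = lam • E + D) (hR : ∀ x ∈ E, ∀ y ∈ E, dist x y ≤ R) (hδ : lam ^ k * R < δ)
    (hne : P.Nonempty) (hC : ∀ x ∈ P, ∀ y ∈ P, dist x y ≤ C * lam ^ k) :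
    ∃ G ⊆ neighborTypes lam D ∩ Metric.closedBall 0 C, ∃ a,
      P = (fun x ↦ lam ^ k • x + a) '' (E + G) := by
  obtain ⟨A, hA, rfl⟩ := hP.exists_eq_smul_add hlam hE hR hδ
  obtain ⟨_, ⟨_, ⟨e, he, rfl⟩, a, ha, rfl⟩⟩ := hne
  have hk : 0 < lam ^ k := pow_pos hlam k
  refine ⟨(fun b ↦ (lam ^ k)⁻¹ • (b - a)) '' A, ?_, a, ?_⟩
  · rintro _ ⟨b, hb, rfl⟩
    refine ⟨inv_smul_sub_mem_neighborTypes (hA hb) (hA ha), mem_closedBall_zero_iff.2 ?_⟩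
    have he' := Set.smul_mem_smul_set (a := lam ^ k) he
    have hdist := hC _ (Set.add_mem_add he' hb) _ (Set.add_mem_add he' ha)
    rw [norm_smul, norm_inv, Real.norm_of_nonneg hk.le, inv_mul_le_iff₀ hk, mul_comm]
    simpa [dist_eq_norm] using hdist
  · rw [← Set.image2_add, ← Set.image2_add, ← Set.image_smul, Set.image_image2,
      Set.image2_image_left, Set.image2_image_right]
    simp only [smul_add, smul_inv_smul₀ hk.ne', add_assoc, sub_add_cancel]

theorem exists_toReal_hausdorffMeasure_eq [MeasurableSpace V] [BorelSpace V]
    (hP : IsIsolatedIn P E δ) (hlam : 0 < lam) (hE : E = lam • E + D)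
    (hR : ∀ x ∈ E, ∀ y ∈ E, dist x y ≤ R) (hδ : lam ^ k * R < δ)
    (hne : P.Nonempty) (hC : ∀ x ∈ P, ∀ y ∈ P, dist x y ≤ C * lam ^ k) {s : ℝ} (hs : 0 ≤ s) :
    ∃ G ⊆ neighborTypes lam D ∩ Metric.closedBall 0 C,
      (μH[s] P).toReal = (lam ^ k) ^ s * (μH[s] (E + G)).toReal := by
  obtain ⟨G, hG, a, rfl⟩ := hP.exists_eq_image_add_neighborTypes hlam hE hR hδ hne hC
  refine ⟨G, hG, toReal_hausdorffMeasure_image_of_dist_eq (pow_pos hlam k) (fun x y ↦ ?_) hs _⟩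
  rw [dist_add_right, dist_smul₀, Real.norm_of_nonneg (pow_pos hlam k).le]

end IsIsolatedIn

end Pieces

theorem exists_pow_mul_lt_and_le_mul_pow {lam κ : ℝ} (hlam : lam ∈ Set.Ioo 0 1) (hκ : 0 < κ)
    (R : ℝ) :
    ∃ C, ∀ ρ ∈ Set.Ioc (0 : ℝ) 1, ∃ k : ℕ, lam ^ k * R < κ * ρ ∧ ρ ≤ C * lam ^ k := by
  set M := max R κ
  have hM : 0 < M := hκ.trans_le (le_max_right R κ)
  refine ⟨M / (κ * lam), fun ρ hρ ↦ ?_⟩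
  have hle_one : κ * ρ / M ≤ 1 :=
    (div_le_one hM).2 ((mul_le_of_le_one_right hκ.le hρ.2).trans (le_max_right R κ))
  obtain ⟨k, hlt, hle⟩ :=
    exists_nat_pow_near_of_lt_one (div_pos (mul_pos hκ hρ.1) hM) hle_one hlam.1 hlam.2
  refine ⟨k + 1, ?_, ?_⟩
  · calc lam ^ (k + 1) * R ≤ lam ^ (k + 1) * M :=
          mul_le_mul_of_nonneg_left (le_max_left R κ) (pow_pos hlam.1 _).le
      _ < κ * ρ := (lt_div_iff₀ hM).1 hlt
  · calc ρ ≤ lam ^ k * M / κ := by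
          rw [le_div_iff₀ hκ, mul_comm]
          exact (div_le_iff₀ hM).1 hle
      _ = M / (κ * lam) * lam ^ (k + 1) := by
          have := hlam.1.ne'
          rw [pow_succ]
          field_simp

section Density

variable {X V : Type*} [MetricSpace X] [NormedAddCommGroup V] [NormedSpace ℝ V]
  [MeasurableSpace V] [BorelSpace V] {t : ℕ} {g : Fin t → X → X} {r : Fin t → ℝ} {F : Set X}
  {f : X → V} {Cf lam s : ℝ} {D : Set V}

-- For `lam ^ k` comparable to `ρ`, the images of the cylinders are unions of level `k` copies of
-- `f '' F` whose relative positions are neighbour types of bounded norm.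
theorem IsDustLikeAttractor.exists_finite_toReal_hausdorffMeasure_image_cylinder
    (hF : IsDustLikeAttractor g r F) (hlam : lam ∈ Set.Ioo 0 1) (hD : HasFiniteType lam D)
    (hE : f '' F = lam • f '' F + D) (hCf : 0 < Cf)
    (hbilip : ∀ x ∈ F, ∀ y ∈ F,
      Cf⁻¹ * dist x y ≤ dist (f x) (f y) ∧ dist (f x) (f y) ≤ Cf * dist x y)
    (hs : 0 ≤ s) {θ : ℝ} (hθ : 0 < θ) :
    ∃ S : Set ℝ, S.Finite ∧ ∀ ρ ∈ Set.Ioc (0 : ℝ) 1, ∃ L : ℝ, 0 < L ∧ ∀ w,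
      wordRatio r w ∈ Set.Icc (θ * ρ) ρ →
        (μH[s] (f '' _root_.cylinder g F w)).toReal ∈ L • S := by
  obtain ⟨c, hc, hiso⟩ := hF.exists_isIsolatedIn_cylinder
  set R := Cf * Metric.diam F
  have hR_nonneg : 0 ≤ R := mul_nonneg hCf.le Metric.diam_nonneg
  have hdist : ∀ w, ∀ x ∈ _root_.cylinder g F w, ∀ y ∈ _root_.cylinder g F w,
      dist (f x) (f y) ≤ R * wordRatio r w := fun w x hx y hy ↦
    hF.dist_image_le_of_mem_cylinder hCf.le (fun x hx y hy ↦ (hbilip x hx y hy).2) hx hy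
  obtain ⟨C, hC⟩ := exists_pow_mul_lt_and_le_mul_pow hlam
    (mul_pos (mul_pos (inv_pos.2 hCf) hc) hθ) R
  refine ⟨(fun G ↦ (μH[s] (f '' F + G)).toReal) ''
    (neighborTypes lam D ∩ Metric.closedBall 0 (R * C)).powerset,
    (hD _).finite_subsets.image _, fun ρ hρ ↦ ?_⟩
  obtain ⟨k, hk_lt, hk_le⟩ := hC ρ hρ
  refine ⟨(lam ^ k) ^ s, Real.rpow_pos_of_pos (pow_pos hlam.1 k) s, fun w hw ↦ ?_⟩
  have hdiam : ∀ x ∈ f '' F, ∀ y ∈ f '' F, dist x y ≤ R := by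
    simpa [Set.forall_mem_image, wordRatio, _root_.cylinder] using hdist []
  have hisolated : IsIsolatedIn (f '' _root_.cylinder g F w) (f '' F) (Cf⁻¹ * c * θ * ρ) := by
    refine ((hiso w).image (inv_pos.2 hCf).le fun x hx y hy ↦ (hbilip x hx y hy).1).mono ?_
    rw [mul_assoc _ θ ρ, mul_assoc]
    gcongr
    exact hw.1
  have hsmall : ∀ x ∈ f '' _root_.cylinder g F w, ∀ y ∈ f '' _root_.cylinder g F w,
      dist x y ≤ R * C * lam ^ k := by
    rintro _ ⟨x, hx, rfl⟩ _ ⟨y, hy, rfl⟩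
    rw [mul_assoc]
    exact (hdist w x hx y hy).trans
      (mul_le_mul_of_nonneg_left (hw.2.trans hk_le) hR_nonneg)
  obtain ⟨G, hG, hμ⟩ := hisolated.exists_toReal_hausdorffMeasure_eq hlam.1 hE hdiam hk_lt
    ((hF.cylinder_nonempty w).image f) hsmall hs
  exact ⟨_, ⟨G, hG, rfl⟩, hμ.symm⟩

variable [MeasurableSpace X] [BorelSpace X]

/-- The ratio `h(B) = H^s(f(B)) / H^s(B)`, as a real number. -/
noncomputable def hausdorffDensity (f : X → V) (s : ℝ) (B : Set X) : ℝ :=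
  (μH[s] (f '' B)).toReal / (μH[s] B).toReal

theorem IsDustLikeAttractor.finite_hausdorffDensity_ratios_of_letter
    (hF : IsDustLikeAttractor g r F) (hlam : lam ∈ Set.Ioo 0 1) (hD : HasFiniteType lam D)
    (hE : f '' F = lam • f '' F + D) (hCf : 0 < Cf)
    (hbilip : ∀ x ∈ F, ∀ y ∈ F,
      Cf⁻¹ * dist x y ≤ dist (f x) (f y) ∧ dist (f x) (f y) ≤ Cf * dist x y)
    (hs : 0 ≤ s) (j : Fin t) :
    {x : ℝ | ∃ w, x = hausdorffDensity f s (_root_.cylinder g F (w ++ [j])) /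
      hausdorffDensity f s (_root_.cylinder g F w)}.Finite := by
  obtain ⟨hj0, hj1⟩ := hF.ratio_mem j
  obtain ⟨S, hS, hvalues⟩ :=
    hF.exists_finite_toReal_hausdorffMeasure_image_cylinder hlam hD hE hCf hbilip hs hj0
  set M := (μH[s] F).toReal
  refine (hS.image2 (fun a b ↦ a / (r j ^ s * M) / (b / M)) hS).subset ?_
  rintro _ ⟨w, rfl⟩
  have hρ := hF.wordRatio_mem_Ioc w
  obtain ⟨L, hL, hmem⟩ := hvalues _ hρ
  have hle : r j * wordRatio r w ≤ wordRatio r w := mul_le_of_le_one_left hρ.1.le hj1.le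
  obtain ⟨a, ha, hμa : L * a = _⟩ := hmem (w ++ [j]) (by
    rw [wordRatio_append_singleton, mul_comm _ (r j)]
    exact ⟨le_rfl, hle⟩)
  obtain ⟨b, hb, hμb : L * b = _⟩ := hmem w ⟨hle, le_rfl⟩
  refine ⟨a, ha, b, hb, ?_⟩
  have hscale : L / wordRatio r w ^ s ≠ 0 := (div_pos hL (Real.rpow_pos_of_pos hρ.1 s)).ne'
  calc a / (r j ^ s * M) / (b / M)
    _ = L / wordRatio r w ^ s * (a / (r j ^ s * M)) / (L / wordRatio r w ^ s * (b / M)) :=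
      (mul_div_mul_left _ _ hscale).symm
    _ = _ := by
      rw [← mul_div_mul_comm, ← mul_div_mul_comm, hμa, hμb, ← mul_assoc,
        ← Real.mul_rpow hρ.1.le hj0.le, ← wordRatio_append_singleton,
        ← hF.toReal_hausdorffMeasure_cylinder hs, ← hF.toReal_hausdorffMeasure_cylinder hs,
        hausdorffDensity, hausdorffDensity]

end Density

theorem finiteness_of_density_ratios_general {X V : Type*} [MetricSpace X] [MeasurableSpace X]
    [BorelSpace X] [NormedAddCommGroup V] [NormedSpace ℝ V] [MeasurableSpace V] [BorelSpace V]
    {lam : ℝ} (hlam : lam ∈ Set.Ioo 0 1) {D E : Set V} (hD : HasFiniteType lam D)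
    (hE : E = lam • E + D) {t : ℕ} {g : Fin t → X → X} {r : Fin t → ℝ} {F : Set X}
    (hF : IsDustLikeAttractor g r F) {f : X → V} (hfim : f '' F = E) {Cf : ℝ} (hCf : 0 < Cf)
    (hbilip : ∀ x ∈ F, ∀ y ∈ F,
      Cf⁻¹ * dist x y ≤ dist (f x) (f y) ∧ dist (f x) (f y) ≤ Cf * dist x y)
    {s : ℝ} (hs : 0 ≤ s) (hsF : dimH F = ENNReal.ofReal s) :
    {x : ℝ | ∃ (w : List (Fin t)) (j : Fin t),
      x = hausdorffDensity f s (_root_.cylinder g F (w ++ [j])) /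
        hausdorffDensity f s (_root_.cylinder g F w)}.Finite := by
  subst hfim
  refine (Set.finite_iUnion fun j ↦ hF.finite_hausdorffDensity_ratios_of_letter hlam hD hE hCf
    hbilip hs j).subset ?_
  rintro x ⟨w, j, hx⟩
  exact Set.mem_iUnion.2 ⟨j, w, hx⟩

/-- **Lemma 3.** With `E ∈ 𝒜(λ, n, m)`, `F` dust-like, `f : F → E`
a bi-Lipschitz bijection, `s` the common Hausdorff dimension and
`h(B) = H^s(f(B))/H^s(B)`, the set of ratios `h(F_{w∗j})/h(F_w)` is finite. -/
theorem finiteness_of_density_ratios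
    (lam : ℝ) (n m : ℕ) (E : Set ℝ) (hE : IsInClassA lam n m E)
    (d t : ℕ) (ht : 2 ≤ t)
    (F : Set (EuclideanSpace ℝ (Fin d)))
    (g : Fin t → EuclideanSpace ℝ (Fin d) → EuclideanSpace ℝ (Fin d))
    (r : Fin t → ℝ)
    (hr : ∀ j, r j ∈ Set.Ioo (0 : ℝ) 1)
    (hg : ∀ j x y, dist (g j x) (g j y) = r j * dist x y)
    (hFne : F.Nonempty) (hFc : IsCompact F)
    (hFattr : F = ⋃ j, g j '' F)
    (hsep : ∀ j j', j ≠ j' → Disjoint (g j '' F) (g j' '' F))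
    (f : EuclideanSpace ℝ (Fin d) → ℝ)
    (hfim : f '' F = E) (hfinj : Set.InjOn f F)
    (Cf : ℝ) (hCf : 0 < Cf)
    (hbilip : ∀ x ∈ F, ∀ y ∈ F,
      Cf⁻¹ * dist x y ≤ dist (f x) (f y) ∧ dist (f x) (f y) ≤ Cf * dist x y)
    (s : ℝ) (hs : 0 ≤ s)
    (hsE : dimH E = ENNReal.ofReal s) (hsF : dimH F = ENNReal.ofReal s) :
    {x : ℝ | ∃ (w : List (Fin t)) (j : Fin t),
      x = ((μH[s] (f '' cylinder g F (w ++ [j]))).toReal /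
            (μH[s] (cylinder g F (w ++ [j]))).toReal) /
          ((μH[s] (f '' cylinder g F w)).toReal /
            (μH[s] (cylinder g F w)).toReal)}.Finite := by
  obtain ⟨D, hD, hED⟩ := hE.exists_isClassADigitSet
  exact finiteness_of_density_ratios_general hE.1 hD.hasFiniteType hED
    ⟨hr, hg, hFne, hFc, hFattr, hsep⟩ hfim hCf hbilip hs hsF
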